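/- arXiv:0705.1286 — 8 statements merged into one kernel-verified Lean document; each statement's English description precedes it below -/
import Mathlib

section
/- Let R be an integral domain and let I and J be power stable ideals of R[X] such that the ideals I ∩ R and J ∩ R of R are comaximal (i.e. (I ∩ R) + (J ∩ R) = R). Then the ideal I ∩ J of R[X] is power stable. -/
open Polynomial

/-- An ideal `I` of `R[X]` is power stable if for all `t ≥ 1`,
`I^t ∩ R = (I ∩ R)^t`, intersections with `R` meaning contraction along `C : R →+* R[X]`. -/
def IsPowerStable {R : Type*} [CommRing R] (I : Ideal R[X]) : Prop :=
  ∀ t : ℕ, 1 ≤ t →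
    (I ^ t).comap (C : R →+* R[X]) = (I.comap (C : R →+* R[X])) ^ t

/-!
Contraction commutes with intersections but not with powers. Powers of comaximal ideals do
distribute over their intersection, and comaximality of the contractions forces comaximality of
the ideals themselves, so powers can be distributed both before and after contracting.
-/

theorem inf_pow_of_isCoprime {R : Type*} [CommSemiring R] {I J : Ideal R} (h : IsCoprime I J)
    (t : ℕ) : (I ⊓ J) ^ t = I ^ t ⊓ J ^ t := by
  rw [← Ideal.mul_eq_inf_of_isCoprime h, mul_pow, Ideal.mul_eq_inf_of_isCoprime h.pow]

section Comap

variable {R S : Type*} [CommSemiring R] [CommSemiring S] {f : R →+* S} {I J : Ideal S}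

theorem isCoprime_of_isCoprime_comap (h : IsCoprime (I.comap f) (J.comap f)) :
    IsCoprime I J := by
  obtain ⟨a, ha, b, hb, hab⟩ := h.exists
  exact Ideal.isCoprime_iff_exists.2 ⟨f a, ha, f b, hb, by rw [← map_add, hab, map_one]⟩

theorem comap_inf_pow_of_isCoprime_comap {t : ℕ} (h : IsCoprime (I.comap f) (J.comap f))
    (hI : (I ^ t).comap f = I.comap f ^ t) (hJ : (J ^ t).comap f = J.comap f ^ t) :
    ((I ⊓ J) ^ t).comap f = (I ⊓ J).comap f ^ t :=
  calc ((I ⊓ J) ^ t).comap f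
      = (I ^ t).comap f ⊓ (J ^ t).comap f := by
        rw [inf_pow_of_isCoprime (isCoprime_of_isCoprime_comap h), Ideal.comap_inf]
    _ = I.comap f ^ t ⊓ J.comap f ^ t := by rw [hI, hJ]
    _ = (I ⊓ J).comap f ^ t := by rw [← inf_pow_of_isCoprime h, Ideal.comap_inf]

end Comap

theorem stmt_1_general {R : Type*} [CommRing R] {I J : Ideal R[X]}
    (hI : IsPowerStable I) (hJ : IsPowerStable J)
    (hco : IsCoprime (I.comap (C : R →+* R[X])) (J.comap (C : R →+* R[X]))) :
    IsPowerStable (I ⊓ J) :=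
  fun t ht => comap_inf_pow_of_isCoprime_comap hco (hI t ht) (hJ t ht)

theorem stmt_1 {R : Type*} [CommRing R] [IsDomain R] (I J : Ideal R[X])
    (hI : IsPowerStable I) (hJ : IsPowerStable J)
    (hco : I.comap (C : R →+* R[X]) ⊔ J.comap (C : R →+* R[X]) = ⊤) :
    IsPowerStable (I ⊓ J) :=
  stmt_1_general hI hJ (Ideal.isCoprime_iff_sup_eq.2 hco)
end

section
/- Let R be an integral domain and I an ideal of R[X]. Then I is power stable if and only if for every prime ideal P of R, the localized ideal I_P (the image extension of I in R_P[X], where R_P is the localization of R at P) is power stable in R_P[X]. -/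
open Polynomial

/-!
Let `A` be the localization of `R` at a submonoid `M`. Then `A[X]` is the localization of `R[X]` at
`M`, so localizing commutes with powers of ideals and with contraction to the coefficient ring.
Hence each equality `I ^ t ∩ R = (I ∩ R) ^ t` survives localization and, being an equality of ideals
of `R`, can be checked at the maximal ideals.
-/

theorem under_map_eq_map_under_of_isLocalization {R S A B : Type*} [CommSemiring R]
    [CommSemiring S] [CommSemiring A] [CommSemiring B] [Algebra R S] [Algebra R A] [Algebra S B]
    [Algebra A B] [Algebra R B] [IsScalarTower R S B] [IsScalarTower R A B] (M : Submonoid R)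
    [IsLocalization M A] [IsLocalization (Algebra.algebraMapSubmonoid S M) B] (J : Ideal S) :
    (J.map (algebraMap S B)).under A = (J.under R).map (algebraMap R A) := by
  ext x
  obtain ⟨r, s, rfl⟩ := IsLocalization.exists_mk'_eq M x
  rw [Ideal.mem_comap, IsLocalization.algebraMap_mk' S,
    IsLocalization.mk'_mem_map_algebraMap_iff, IsLocalization.mk'_mem_map_algebraMap_iff]
  simp only [Algebra.algebraMapSubmonoid, Submonoid.mem_map, exists_exists_and_eq_and,
    Ideal.mem_comap, map_mul]

theorem comap_C_map_mapRingHom_of_isLocalization {R A : Type*} [CommSemiring R] [CommSemiring A]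
    [Algebra R A] (M : Submonoid R) [IsLocalization M A] (J : Ideal R[X]) :
    (J.map (mapRingHom (algebraMap R A))).comap (C : A →+* A[X]) =
      (J.comap (C : R →+* R[X])).map (algebraMap R A) := by
  let : Algebra R[X] A[X] := Polynomial.algebra R A
  have : IsLocalization (Algebra.algebraMapSubmonoid R[X] M) A[X] :=
    Polynomial.isLocalization M A
  exact under_map_eq_map_under_of_isLocalization M J

theorem isPowerStable_map_iff_of_isLocalization {R A : Type*} [CommRing R] [CommRing A]
    [Algebra R A] (M : Submonoid R) [IsLocalization M A] {I : Ideal R[X]} :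
    IsPowerStable (I.map (mapRingHom (algebraMap R A))) ↔
      ∀ t : ℕ, 1 ≤ t → ((I ^ t).comap (C : R →+* R[X])).map (algebraMap R A) =
        ((I.comap (C : R →+* R[X])) ^ t).map (algebraMap R A) := by
  simp only [IsPowerStable, ← Ideal.map_pow, comap_C_map_mapRingHom_of_isLocalization M]

theorem IsPowerStable.map_of_isLocalization {R A : Type*} [CommRing R] [CommRing A]
    [Algebra R A] (M : Submonoid R) [IsLocalization M A] {I : Ideal R[X]} (hI : IsPowerStable I) :
    IsPowerStable (I.map (mapRingHom (algebraMap R A))) :=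
  (isPowerStable_map_iff_of_isLocalization M).mpr fun t ht ↦
    congrArg (Ideal.map (algebraMap R A)) (hI t ht)

theorem isPowerStable_of_localization_maximal {R : Type*} [CommRing R] {I : Ideal R[X]}
    (h : ∀ (P : Ideal R) [P.IsMaximal],
      IsPowerStable (I.map (mapRingHom (algebraMap R (Localization.AtPrime P))))) :
    IsPowerStable I := fun t ht ↦
  Ideal.eq_of_localization_maximal fun P _ ↦
    (isPowerStable_map_iff_of_isLocalization P.primeCompl).mp (h P) t ht

theorem stmt_2_general {R : Type*} [CommRing R] (I : Ideal R[X]) :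
    IsPowerStable I ↔
      ∀ (P : Ideal R) [P.IsPrime],
        IsPowerStable (I.map (mapRingHom (algebraMap R (Localization.AtPrime P)))) :=
  ⟨fun hI P _ ↦ hI.map_of_isLocalization P.primeCompl,
    fun h ↦ isPowerStable_of_localization_maximal fun P _ ↦ h P⟩

theorem stmt_2 {R : Type*} [CommRing R] [IsDomain R] (I : Ideal R[X]) :
    IsPowerStable I ↔
      ∀ (P : Ideal R) (hP : P.IsPrime),
        haveI := hP
        IsPowerStable
          (I.map (mapRingHom (algebraMap R (Localization.AtPrime P)))) :=
  stmt_2_general I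
end

section
/- Let R be a principal ideal domain and I an ideal of R[X] with I ∩ R = Rd. If the image of I in (R/(d))[X] under the reduction map R[X] → (R/(d))[X] is generated by a single element that is a non-zero-divisor of (R/(d))[X], then I is power stable. -/
open Polynomial

/-!
If `d = 0`, both `I ^ t ∩ R` and `(I ∩ R) ^ t` vanish. Otherwise lift the generator `g` to `f ∈ I`;
then `I = (d, f)`, where `d` is regular and `f` is regular modulo `d`. Since
`I ^ (n + 1) = d I ^ n + (f ^ (n + 1))`, regularity of the sequence `d, f` gives
`(I ^ (n + 1) : d) = I ^ n`. A constant in `I ^ (n + 1)` lies in `I ∩ R = (d)`, so dividing it by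
`d` yields a constant in `I ^ n`, and induction shows that it is a multiple of `d ^ (n + 1)`.
-/

theorem add_pow_succ_eq_mul_add_pow {S : Type*} [IdemCommSemiring S] (a b : S) (n : ℕ) :
    (a + b) ^ (n + 1) = a * (a + b) ^ n + b ^ (n + 1) := by
  induction n with
  | zero => simp
  | succ n ih =>
    have absorb : (a + b) ^ (n + 1) + b * (a + b) ^ n = (a + b) ^ (n + 1) := by
      rw [pow_succ', add_mul, add_assoc, add_idem]
    calc (a + b) ^ (n + 2)
        = a * (a + b) ^ (n + 1) + b * (a + b) ^ (n + 1) := by rw [pow_succ', add_mul]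
      _ = a * (a + b) ^ (n + 1) + b * (a * (a + b) ^ n + b ^ (n + 1)) := by
          nth_rw 2 [ih]
      _ = a * ((a + b) ^ (n + 1) + b * (a + b) ^ n) + b ^ (n + 2) := by ring
      _ = a * (a + b) ^ (n + 1) + b ^ (n + 2) := by rw [absorb]

section

variable {R A B : Type*} [CommRing R] [CommRing A] [CommRing B]

theorem mem_span_sup_span_pow_of_mul_mem_pow_succ {e f y : A} {ψ : A →+* B}
    (he : e ∈ nonZeroDivisors A) (hψ : RingHom.ker ψ = Ideal.span {e})
    (hf : ψ f ∈ nonZeroDivisors B) {n : ℕ}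
    (hy : e * y ∈ (Ideal.span {e} ⊔ Ideal.span {f}) ^ (n + 1)) :
    y ∈ (Ideal.span {e} ⊔ Ideal.span {f}) ^ n := by
  set I := Ideal.span {e} ⊔ Ideal.span {f}
  have hfI : f ^ (n + 1) ∈ I ^ n := Ideal.pow_le_pow_right n.le_succ
    (Ideal.pow_mem_pow (Ideal.mem_sup_right (Ideal.mem_span_singleton_self f)) _)
  have hpow : I ^ (n + 1) = Ideal.span {e} * I ^ n ⊔ Ideal.span {f ^ (n + 1)} := by
    rw [← Ideal.span_singleton_pow]
    exact add_pow_succ_eq_mul_add_pow _ _ n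
  rw [hpow, sup_comm, Ideal.mem_span_singleton_sup] at hy
  obtain ⟨a, b, hb, hab⟩ := hy
  obtain ⟨s, hs, rfl⟩ := Ideal.mem_span_singleton_mul.1 hb
  have ha : a ∈ Ideal.span {e} := by
    have hψe : ψ e = 0 := by
      rw [← RingHom.mem_ker, hψ]
      exact Ideal.mem_span_singleton_self e
    have hψa : ψ a * ψ f ^ (n + 1) = 0 := by
      simpa only [map_add, map_mul, map_pow, hψe, zero_mul, add_zero] using congrArg ψ hab
    rw [← hψ, RingHom.mem_ker]
    exact (mul_right_mem_nonZeroDivisors_eq_zero_iff (pow_mem hf _)).1 hψa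
  obtain ⟨a', rfl⟩ := Ideal.mem_span_singleton.1 ha
  have y_eq : y = a' * f ^ (n + 1) + s :=
    (mul_cancel_left_mem_nonZeroDivisors he).1 (by rw [← hab]; ring)
  rw [y_eq]
  exact add_mem (Ideal.mul_mem_left _ _ hfI) hs

theorem comap_span_sup_span_pow {φ : R →+* A} {ψ : A →+* B} {d : R} {f : A}
    (hd : φ d ∈ nonZeroDivisors A) (hψ : RingHom.ker ψ = Ideal.span {φ d})
    (hf : ψ f ∈ nonZeroDivisors B)
    (hcomap : (Ideal.span {φ d} ⊔ Ideal.span {f}).comap φ = Ideal.span {d}) (n : ℕ) :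
    ((Ideal.span {φ d} ⊔ Ideal.span {f}) ^ n).comap φ = Ideal.span {d} ^ n := by
  set I := Ideal.span {φ d} ⊔ Ideal.span {f}
  refine le_antisymm ?_ (hcomap ▸ Ideal.le_comap_pow φ n)
  induction n with
  | zero => simp
  | succ n ih =>
    intro c hc
    have hcd : c ∈ Ideal.span {d} :=
      hcomap ▸ Ideal.comap_mono (Ideal.pow_le_self n.succ_ne_zero) hc
    obtain ⟨c', rfl⟩ := Ideal.mem_span_singleton.1 hcd
    rw [Ideal.mem_comap, map_mul] at hc
    rw [pow_succ']
    exact Ideal.mul_mem_mul (Ideal.mem_span_singleton_self d)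
      (ih (mem_span_sup_span_pow_of_mul_mem_pow_succ hd hψ hf hc))

theorem exists_eq_ker_sup_span_singleton {ψ : A →+* B} (hψ : Function.Surjective ψ)
    {I : Ideal A} (hker : RingHom.ker ψ ≤ I) {g : B} (hgen : I.map ψ = Ideal.span {g}) :
    ∃ f, ψ f = g ∧ I = RingHom.ker ψ ⊔ Ideal.span {f} := by
  obtain ⟨f, rfl⟩ := hψ g
  refine ⟨f, rfl, ?_⟩
  calc I = (I.map ψ).comap ψ := by
        rw [Ideal.comap_map_of_surjective' ψ hψ, sup_eq_left.2 hker]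
    _ = ((Ideal.span {f}).map ψ).comap ψ := by rw [hgen, Ideal.map_span, Set.image_singleton]
    _ = RingHom.ker ψ ⊔ Ideal.span {f} := by rw [Ideal.comap_map_of_surjective' ψ hψ, sup_comm]

theorem ker_mapRingHom_mk_span_singleton (d : R) :
    RingHom.ker (mapRingHom (Ideal.Quotient.mk (Ideal.span {d}))) = Ideal.span {C d} := by
  rw [Polynomial.ker_mapRingHom, Ideal.mk_ker, Ideal.map_span, Set.image_singleton]

theorem isPowerStable_of_comap_C_eq_bot {I : Ideal R[X]} (hI : I.comap C = ⊥) :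
    IsPowerStable I := by
  intro t ht
  have ht0 : t ≠ 0 := Nat.one_le_iff_ne_zero.1 ht
  rw [hI, ← Ideal.zero_eq_bot, zero_pow ht0, Ideal.zero_eq_bot, eq_bot_iff, ← hI]
  exact Ideal.comap_mono (Ideal.pow_le_self ht0)

end

theorem stmt_3_general {R : Type*} [CommRing R] (I : Ideal R[X]) (d : R)
    (hd_reg : d = 0 ∨ d ∈ nonZeroDivisors R)
    (hd : I.comap (C : R →+* R[X]) = Ideal.span {d})
    (g : (R ⧸ Ideal.span {d})[X])
    (hreg : g ∈ nonZeroDivisors (R ⧸ Ideal.span {d})[X])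
    (hgen : I.map (mapRingHom (Ideal.Quotient.mk (Ideal.span {d}))) = Ideal.span {g}) :
    IsPowerStable I := by
  obtain rfl | hd_reg := hd_reg
  · exact isPowerStable_of_comap_C_eq_bot (by simpa using hd)
  have hker := ker_mapRingHom_mk_span_singleton d
  have hCd : C d ∈ I := Ideal.mem_comap.1 (hd ▸ Ideal.mem_span_singleton_self d)
  have hCd_reg : C d ∈ nonZeroDivisors R[X] :=
    mem_nonZeroDivisors_of_leadingCoeff (by rwa [leadingCoeff_C])
  obtain ⟨f, rfl, hI⟩ := exists_eq_ker_sup_span_singleton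
    (map_surjective _ Ideal.Quotient.mk_surjective)
    (hker ▸ (Ideal.span_singleton_le_iff_mem I).2 hCd) hgen
  rw [hker] at hI
  subst hI
  intro t _
  rw [hd]
  exact comap_span_sup_span_pow hCd_reg hker hreg hd t

theorem stmt_3 {R : Type*} [CommRing R] [IsDomain R] [IsPrincipalIdealRing R]
    (I : Ideal R[X]) (d : R) (hd : I.comap (C : R →+* R[X]) = Ideal.span {d})
    (g : (R ⧸ Ideal.span {d})[X])
    (hreg : g ∈ nonZeroDivisors (R ⧸ Ideal.span {d})[X])
    (hgen : I.map (mapRingHom (Ideal.Quotient.mk (Ideal.span {d}))) = Ideal.span {g}) :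
    IsPowerStable I :=
  stmt_3_general I d ((eq_or_ne d 0).imp_right mem_nonZeroDivisors_of_ne_zero) hd g hreg hgen
end

section
/- Let R be a principal ideal domain. Then every prime ideal of R[X] is power stable. -/
open Polynomial

/-!
If the contraction of `P` to `R` is zero, so are the contractions of its powers. Otherwise it is a
maximal ideal `m`, and since `(R ⧸ m)[X]` is principal, either `P = m R[X]` or `P = m R[X] + (f)`
with `f` monic and nonconstant. In the second case `P ^ t ⊆ m ^ t R[X] + (f)`, and a constant of
this ideal lies in `m ^ t`: modulo `m ^ t` it is a multiple of a nonconstant monic polynomial.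
-/

theorem sup_pow_le_pow_sup {A : Type*} [CommSemiring A] (I J : Ideal A) (t : ℕ) :
    (I ⊔ J) ^ t ≤ I ^ t ⊔ J := by
  induction t with
  | zero => simp
  | succ t ih =>
    calc (I ⊔ J) ^ (t + 1) = (I ⊔ J) ^ t * (I ⊔ J) := pow_succ _ _
      _ ≤ (I ^ t ⊔ J) * (I ⊔ J) := Ideal.mul_mono_left ih
      _ = I ^ (t + 1) ⊔ J * I ⊔ (I ^ t ⊔ J) * J := by
        rw [Ideal.mul_sup, Ideal.sup_mul, ← pow_succ]
      _ ≤ I ^ (t + 1) ⊔ J :=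
        sup_le (sup_le_sup_left Ideal.mul_le_left _) (le_sup_of_le_right Ideal.mul_le_right)

section CommRing

variable {R : Type*} [CommRing R]

theorem comap_C_map_C (J : Ideal R) : (J.map (C : R →+* R[X])).comap C = J := by
  refine le_antisymm (fun c hc => ?_) Ideal.le_comap_map
  simpa only [coeff_C_zero] using Ideal.mem_map_C_iff.1 (Ideal.mem_comap.1 hc) 0

theorem comap_C_map_C_sup_span_singleton {f : R[X]} (hf : f.Monic) (hdeg : f.natDegree ≠ 0)
    (J : Ideal R) : (J.map C ⊔ Ideal.span {f}).comap C = J := by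
  refine le_antisymm (fun c hc => ?_) (Ideal.map_le_iff_le_comap.1 le_sup_left)
  let π := Ideal.Quotient.mk J
  have dvd_mod_J : f.map π ∣ C (π c) := by
    obtain ⟨a, ha, b, hb, hab⟩ := Submodule.mem_sup.1 (Ideal.mem_comap.1 hc)
    have map_a_eq_zero : a.map π = 0 := by
      rwa [← Ideal.mk_ker (I := J), ← ker_mapRingHom] at ha
    rw [← map_C, ← hab, Polynomial.map_add, map_a_eq_zero, zero_add]
    exact map_dvd π (Ideal.mem_span_singleton.1 hb)
  rw [← Ideal.Quotient.eq_zero_iff_mem]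
  by_contra hc_ne
  have : Nontrivial (R ⧸ J) := nontrivial_of_ne _ _ hc_ne
  refine (hf.map π).not_dvd_of_natDegree_lt (C_ne_zero.2 hc_ne) ?_ dvd_mod_J
  rw [natDegree_C, hf.natDegree_map]
  exact Nat.pos_of_ne_zero hdeg

namespace IsPowerStable

theorem of_comap_C_eq_bot {I : Ideal R[X]} (hI : I.comap C = ⊥) : IsPowerStable I := by
  intro t ht
  refine le_antisymm ?_ (Ideal.le_comap_pow _ t)
  calc (I ^ t).comap C ≤ I.comap C := Ideal.comap_mono (Ideal.pow_le_self (by lia))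
    _ = ⊥ := hI
    _ ≤ I.comap C ^ t := bot_le

theorem map_C (J : Ideal R) : IsPowerStable (J.map C) := by
  intro t _
  rw [← Ideal.map_pow, comap_C_map_C, comap_C_map_C]

theorem map_C_sup_span_singleton {f : R[X]} (hf : f.Monic) (hdeg : f.natDegree ≠ 0)
    (J : Ideal R) : IsPowerStable (J.map C ⊔ Ideal.span {f}) := by
  intro t _
  refine le_antisymm ?_ (Ideal.le_comap_pow _ t)
  calc ((J.map C ⊔ Ideal.span {f}) ^ t).comap C
      ≤ ((J ^ t).map C ⊔ Ideal.span {f}).comap C := by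
        rw [Ideal.map_pow]
        exact Ideal.comap_mono (sup_pow_le_pow_sup _ _ t)
    _ = J ^ t := comap_C_map_C_sup_span_singleton hf hdeg _
    _ = (J.map C ⊔ Ideal.span {f}).comap C ^ t := by
        rw [comap_C_map_C_sup_span_singleton hf hdeg]

theorem of_isMaximal_comap_C {I : Ideal R[X]} (hI : (I.comap C).IsMaximal) :
    IsPowerStable I := by
  by_cases hext : I = (I.comap C).map C
  · rw [hext]
    exact map_C _
  · obtain ⟨f, hf, hIf⟩ := exists_monic_span_sup_map_eq R I hI hext
    have hdeg : f.natDegree ≠ 0 := by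
      intro hdeg
      have hfI : f ∈ I := hIf ▸ Ideal.mem_sup_right (Ideal.mem_span_singleton_self f)
      rw [hf.natDegree_eq_zero.1 hdeg] at hfI
      exact hI.ne_top ((Ideal.eq_top_iff_one _).2 (by rwa [Ideal.mem_comap, C_1]))
    rw [hIf]
    exact map_C_sup_span_singleton hf hdeg _

end IsPowerStable

theorem stmt_4_general [Ring.DimensionLEOne R] (P : Ideal R[X]) (hP : P.IsPrime) :
    IsPowerStable P := by
  by_cases hbot : P.comap C = ⊥
  · exact .of_comap_C_eq_bot hbot
  · exact .of_isMaximal_comap_C ((hP.comap C).isMaximal hbot)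

end CommRing

theorem stmt_4 {R : Type*} [CommRing R] [IsDomain R] [IsPrincipalIdealRing R]
    (P : Ideal R[X]) (hP : P.IsPrime) : IsPowerStable P :=
  stmt_4_general P hP
end

section
/- Let R be an integral domain, J an ideal of R, and f(X) ∈ R[X] a monic polynomial of degree at least 1. Then the ideal I of R[X] generated by J (viewed via the coefficient embedding) together with f(X) is power stable; in particular I^t ∩ R = J^t for all t ≥ 1. -/
open Polynomial

/-!
For a monic polynomial `f` of positive degree, `R[X]/(f)` is a nonzero free `R`-module, hence
faithfully flat, so every ideal of `R` is the contraction of its extension to `R[X]/(f)`. The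
image of `(J, f)^t` in `R[X]/(f)` is the extension of `J^t`, because `f` maps to zero. An element
of `R` lying in `(J, f)^t` therefore lies in `J^t`.
-/

theorem comap_pow_map_sup_of_le_ker {R A S : Type*} [CommRing R] [CommRing A] [CommRing S]
    [Algebra R A] [Algebra R S] [Module.FaithfullyFlat R S] (φ : A →ₐ[R] S) {B : Ideal A}
    (hB : B ≤ RingHom.ker φ) (J : Ideal R) (t : ℕ) :
    ((J.map (algebraMap R A) ⊔ B) ^ t).comap (algebraMap R A) = J ^ t := by
  apply le_antisymm
  · have map_pow_eq : ((J.map (algebraMap R A) ⊔ B) ^ t).map (φ : A →+* S) =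
        (J ^ t).map (algebraMap R S) := by
      have hB_map : B.map (φ : A →+* S) = ⊥ := (Ideal.map_eq_bot_iff_le_ker _).mpr hB
      rw [Ideal.map_pow, Ideal.map_sup, hB_map, sup_bot_eq, Ideal.map_map, φ.comp_algebraMap,
        Ideal.map_pow]
    rw [← Ideal.comap_map_eq_self_of_faithfullyFlat (B := S) (J ^ t), ← map_pow_eq,
      ← φ.comp_algebraMap, ← Ideal.comap_comap]
    exact Ideal.comap_mono Ideal.le_comap_map
  · rw [← Ideal.map_le_iff_le_comap, Ideal.map_pow]
    exact Ideal.pow_right_mono le_sup_left t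

theorem faithfullyFlat_adjoinRoot_of_monic {R : Type*} [CommRing R] {f : R[X]}
    (hf : f.Monic) (hf_ne_one : f ≠ 1) : Module.FaithfullyFlat R (AdjoinRoot f) := by
  have : Nontrivial (AdjoinRoot f) := by
    rw [AdjoinRoot, Ideal.Quotient.nontrivial_iff, Ne, Ideal.span_singleton_eq_top, hf.isUnit_iff]
    exact hf_ne_one
  have : Module.Free R (AdjoinRoot f) := hf.free_adjoinRoot
  infer_instance

theorem comap_C_pow_map_C_sup_span_singleton {R : Type*} [CommRing R] (J : Ideal R) {f : R[X]}
    (hf : f.Monic) (hf_ne_one : f ≠ 1) (t : ℕ) :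
    ((J.map (C : R →+* R[X]) ⊔ Ideal.span {f}) ^ t).comap (C : R →+* R[X]) = J ^ t := by
  have := faithfullyFlat_adjoinRoot_of_monic hf hf_ne_one
  have hspan : Ideal.span {f} ≤ RingHom.ker (AdjoinRoot.mkₐ f) := by
    rw [Ideal.span_singleton_le_iff_mem, RingHom.mem_ker, AdjoinRoot.coe_mkₐ, AdjoinRoot.mk_self]
  exact comap_pow_map_sup_of_le_ker (AdjoinRoot.mkₐ f) hspan J t

theorem IsPowerStable.of_comap_C_pow_eq {R : Type*} [CommRing R] {I : Ideal R[X]} {J : Ideal R}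
    (h : ∀ t : ℕ, 1 ≤ t → (I ^ t).comap (C : R →+* R[X]) = J ^ t) : IsPowerStable I := by
  have hI : I.comap (C : R →+* R[X]) = J := by simpa only [pow_one] using h 1 le_rfl
  intro t ht
  rw [hI, h t ht]

theorem stmt_5_general {R : Type*} [CommRing R] (J : Ideal R) (f : R[X])
    (hf : f.Monic) (hdeg : 1 ≤ f.natDegree) :
    IsPowerStable (J.map (C : R →+* R[X]) ⊔ Ideal.span {f}) ∧
      ∀ t : ℕ,
        ((J.map (C : R →+* R[X]) ⊔ Ideal.span {f}) ^ t).comap (C : R →+* R[X]) = J ^ t := by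
  have hf_ne_one : f ≠ 1 := by
    rintro rfl
    simp at hdeg
  have hcomap := comap_C_pow_map_C_sup_span_singleton J hf hf_ne_one
  exact ⟨.of_comap_C_pow_eq fun t _ => hcomap t, hcomap⟩

theorem stmt_5 {R : Type*} [CommRing R] [IsDomain R] (J : Ideal R) (f : R[X])
    (hf : f.Monic) (hdeg : 1 ≤ f.natDegree) :
    IsPowerStable (J.map (C : R →+* R[X]) ⊔ Ideal.span {f}) ∧
      ∀ t : ℕ, 1 ≤ t →
        ((J.map (C : R →+* R[X]) ⊔ Ideal.span {f}) ^ t).comap (C : R →+* R[X]) = J ^ t :=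
  (stmt_5_general J f hf hdeg).imp_right fun hcomap t _ => hcomap t
end

section
/- Let R be a Jacobson (Hilbert) integral domain. Then every maximal ideal of R[X] is power stable. -/
open Polynomial

/-!
Let `I` be an ideal of `R[X]` whose contraction `m` to `R` is maximal. As `(R ⧸ m)[X]` is a
principal ideal domain, `I = mR[X] + K`, where `K` is zero or generated by a monic nonunit, so
`A = R[X] ⧸ K` is free and nonzero, hence faithfully flat, over `R`. The image of `I ^ t` in `A` is
`m ^ t A`, which faithful flatness contracts to `m ^ t`. Over a Jacobson ring the contraction of a
maximal ideal of `R[X]` is maximal.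
-/

section Contraction

variable {R S : Type*} [CommRing R] [CommRing S] [Algebra R S]

lemma map_quotientMk_map_sup_pow (J : Ideal R) (K : Ideal S) (t : ℕ) :
    ((J.map (algebraMap R S) ⊔ K) ^ t).map (Ideal.Quotient.mk K) =
      (J ^ t).map (algebraMap R (S ⧸ K)) := by
  rw [Ideal.map_pow, Ideal.map_sup, Ideal.map_map, Ideal.map_quotient_self, sup_bot_eq,
    Ideal.map_pow, Ideal.Quotient.mk_comp_algebraMap]

lemma comap_map_sup_pow_of_faithfullyFlat (J : Ideal R) (K : Ideal S)
    [Module.FaithfullyFlat R (S ⧸ K)] (t : ℕ) :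
    ((J.map (algebraMap R S) ⊔ K) ^ t).comap (algebraMap R S) = J ^ t := by
  set I := J.map (algebraMap R S) ⊔ K
  apply le_antisymm
  · calc (I ^ t).comap (algebraMap R S)
        ≤ ((I ^ t).map (Ideal.Quotient.mk K)).comap (algebraMap R (S ⧸ K)) :=
          fun _ hr ↦ Ideal.mem_map_of_mem (Ideal.Quotient.mk K) hr
      _ = J ^ t := by
          rw [map_quotientMk_map_sup_pow, Ideal.comap_map_eq_self_of_faithfullyFlat]
  · rw [← Ideal.map_le_iff_le_comap, Ideal.map_pow]
    exact Ideal.pow_right_mono le_sup_left t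

end Contraction

section Polynomial

variable {R : Type*} [CommRing R]

lemma isPowerStable_map_C_sup (J : Ideal R) (K : Ideal R[X])
    [Module.FaithfullyFlat R (R[X] ⧸ K)] : IsPowerStable (J.map C ⊔ K) := by
  have comap_pow (t : ℕ) : ((J.map C ⊔ K) ^ t).comap C = J ^ t :=
    comap_map_sup_pow_of_faithfullyFlat J K t
  have comap_self : (J.map C ⊔ K).comap C = J := by simpa only [pow_one] using comap_pow 1
  intro t _
  rw [comap_pow, comap_self]

lemma isPowerStable_map_C (J : Ideal R) : IsPowerStable (J.map C) := by
  have : Module.FaithfullyFlat R (R[X] ⧸ (⊥ : Ideal R[X])) :=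
    .of_linearEquiv R (ℕ →₀ R)
      ((AlgEquiv.quotientBot R R[X]).toLinearEquiv.trans (basisMonomials R).repr)
  simpa only [sup_bot_eq] using isPowerStable_map_C_sup J ⊥

lemma faithfullyFlat_quotient_span_singleton_of_monic {f : R[X]} (hf : f.Monic) (hu : ¬IsUnit f) :
    Module.FaithfullyFlat R (R[X] ⧸ Ideal.span {f}) := by
  have : Module.Free R (R[X] ⧸ Ideal.span {f}) := hf.free_adjoinRoot
  have : Nontrivial (R[X] ⧸ Ideal.span {f}) :=
    Ideal.Quotient.nontrivial_iff.mpr (Ideal.span_singleton_eq_top.not.mpr hu)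
  infer_instance

end Polynomial

theorem stmt_10_general {R : Type*} [CommRing R] (I : Ideal R[X])
    (hI : (I.comap (C : R →+* R[X])).IsMaximal) : IsPowerStable I := by
  by_cases hmap : I = (I.comap C).map C
  · rw [hmap]
    exact isPowerStable_map_C _
  · obtain ⟨f, hf, hIf⟩ := exists_monic_span_sup_map_eq R I hI hmap
    have hfI : f ∈ I := by
      rw [hIf]
      exact Ideal.mem_sup_right (Ideal.mem_span_singleton_self f)
    have hu : ¬IsUnit f := fun hu ↦
      hI.ne_top (Ideal.comap_eq_top_iff.mpr (Ideal.eq_top_of_isUnit_mem I hfI hu))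
    have := faithfullyFlat_quotient_span_singleton_of_monic hf hu
    rw [hIf]
    exact isPowerStable_map_C_sup _ _

theorem stmt_10 {R : Type*} [CommRing R] [IsDomain R] [IsJacobsonRing R]
    (M : Ideal R[X]) (hM : M.IsMaximal) : IsPowerStable M :=
  stmt_10_general M (isMaximal_comap_C_of_isJacobsonRing M)
end

section
/- Let R be a Noetherian integral domain. If every ideal of R[X] is power stable, then R is a field. -/
open Polynomial

/-!
For `a : R`, the ideal `I = (X² - a, aX)` of `R[X]` contracts to `(a²)`, as one sees in the
quadratic algebra `R[ω]`, `ω² = a`, while `a³ ∈ I²`. If `I` is power stable, then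
`a³ ∈ (a²)² = (a⁴)`. When this holds for every `a`, each nonzero class modulo a prime is
invertible, so primes are maximal.
-/

section

variable {R : Type*} [CommRing R]

/-- The ideal `(X² - a, bX)` of `R[X]`. For `b ∣ a` its square contracts to more than the square of
its contraction, unless `(ab)² ∣ a²b`. -/
noncomputable def quadraticIdeal (a b : R) : Ideal R[X] :=
  Ideal.span {X ^ 2 - C a, C b * X}

namespace quadraticIdeal

open Ideal

theorem dvd_of_C_mem {a b c : R} (hc : C c ∈ quadraticIdeal a b) : a * b ∣ c := by
  obtain ⟨u, v, huv⟩ := mem_span_pair.mp hc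
  let ω : QuadraticAlgebra R a 0 := .omega
  have omega_sq : ω ^ 2 = algebraMap R _ a := by
    simp [ω, sq, QuadraticAlgebra.omega_mul_omega_eq_algebraMap]
  have eval_eq : aeval ω v * (algebraMap R _ b * ω) = algebraMap R _ c := by
    simpa [omega_sq] using congrArg (aeval ω) huv
  have re_eq : a * (aeval ω v).im * b = c := by
    simpa [ω] using congrArg QuadraticAlgebra.re eval_eq
  exact ⟨(aeval ω v).im, by rw [← re_eq]; ring⟩

theorem C_mul_mem (a b : R) : C (a * b) ∈ quadraticIdeal a b :=
  mem_span_pair.mpr ⟨-C b, X, by rw [C_mul]; ring⟩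

theorem comap_C (a b : R) : (quadraticIdeal a b).comap C = span {a * b} := by
  ext c
  rw [mem_comap, mem_span_singleton]
  refine ⟨dvd_of_C_mem, ?_⟩
  rintro ⟨d, rfl⟩
  rw [C_mul]
  exact mul_mem_right _ _ (C_mul_mem a b)

theorem C_sq_mul_mem_sq {a b : R} (hba : b ∣ a) : C (a ^ 2 * b) ∈ quadraticIdeal a b ^ 2 := by
  obtain ⟨d, rfl⟩ := hba
  let p : R[X] := X ^ 2 - C (b * d)
  let q : R[X] := C b * X
  have expansion : C ((b * d) ^ 2 * b) = C b * (p * p) - X * (p * q) + C d * (q * q) := by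
    simp only [p, q, C_mul, C_pow]
    ring
  have hpI : p ∈ quadraticIdeal (b * d) b := subset_span (.inl rfl)
  have hqI : q ∈ quadraticIdeal (b * d) b := subset_span (.inr rfl)
  rw [expansion, sq]
  exact add_mem (sub_mem (mul_mem_left _ _ (mul_mem_mul hpI hpI))
    (mul_mem_left _ _ (mul_mem_mul hpI hqI))) (mul_mem_left _ _ (mul_mem_mul hqI hqI))

end quadraticIdeal

theorem IsPowerStable.sq_dvd_sq_mul {a b : R} (hba : b ∣ a)
    (h : IsPowerStable (quadraticIdeal a b)) : (a * b) ^ 2 ∣ a ^ 2 * b := by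
  have hmem : a ^ 2 * b ∈ (quadraticIdeal a b ^ 2).comap C :=
    quadraticIdeal.C_sq_mul_mem_sq hba
  rwa [h 2 one_le_two, quadraticIdeal.comap_C, Ideal.span_singleton_pow,
    Ideal.mem_span_singleton] at hmem

theorem krullDimLE_zero_of_forall_exists_pow_succ_dvd_pow
    (h : ∀ a : R, ∃ n : ℕ, a ^ (n + 1) ∣ a ^ n) : Ring.KrullDimLE 0 R := by
  refine .mk₀ fun P hP ↦ Ideal.isMaximal_iff.mpr ⟨P.one_notMem, fun J a hPJ haP haJ ↦ ?_⟩
  obtain ⟨n, b, hb⟩ := h a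
  have hprod : a ^ n * (1 - a * b) ∈ P := by
    rw [mul_sub, mul_one, ← mul_assoc, ← pow_succ, ← hb, sub_self]
    exact P.zero_mem
  have hsub : 1 - a * b ∈ P :=
    (hP.mem_or_mem hprod).resolve_left fun hpow ↦ haP (hP.mem_of_pow_mem n hpow)
  rw [← sub_add_cancel 1 (a * b)]
  exact J.add_mem (hPJ hsub) (J.mul_mem_right b haJ)

theorem stmt_14_general (h : ∀ I : Ideal R[X], IsPowerStable I) : Ring.KrullDimLE 0 R := by
  refine krullDimLE_zero_of_forall_exists_pow_succ_dvd_pow fun a ↦ ⟨3, ?_⟩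
  convert (h _).sq_dvd_sq_mul (dvd_refl a) using 1 <;> ring

end

theorem stmt_14 {R : Type*} [CommRing R] [IsDomain R] [IsNoetherianRing R]
    (h : ∀ I : Ideal R[X], IsPowerStable I) : IsField R :=
  have := stmt_14_general h
  Ring.KrullDimLE.isField_of_isDomain
end

section
/- Let R be a principal ideal domain and p a prime element of R. Let I be the ideal of R[X] generated by X² − p and X³. Then I ∩ R = R·p², p³ ∈ I², and consequently I is not power stable (indeed I² ∩ R ≠ (I ∩ R)²). -/
open Polynomial

/-! In the quotient by `I = (X² - p, X³)` one has `X² = p`, so `p² = X⁴ = 0`; the linear functional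
`q ↦ q₀ + p q₂` maps `I` into `(p²)`, so every constant in `I` lies in `(p²)`. On the other hand,
expanding `p³ = (X² - (X² - p))³` leaves `X⁶ = (X³)²` and terms divisible by `(X² - p) X³` or
`(X² - p)²`, so `p³ ∈ I²`, while `(I ∩ R)² = (p⁴)`. -/

section Membership

variable {A : Type*} [CommRing A] (x a : A)

theorem sq_mem_span_sq_sub_cube : a ^ 2 ∈ Ideal.span {x ^ 2 - a, x ^ 3} :=
  Ideal.mem_span_pair.mpr ⟨-(x ^ 2 + a), x, by ring⟩

theorem cube_mem_span_sq_sub_cube_sq : a ^ 3 ∈ Ideal.span {x ^ 2 - a, x ^ 3} ^ 2 := by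
  set I := Ideal.span {x ^ 2 - a, x ^ 3}
  have hf : x ^ 2 - a ∈ I := Ideal.subset_span (Set.mem_insert _ _)
  have hg : x ^ 3 ∈ I := Ideal.subset_span (Set.mem_insert_of_mem _ rfl)
  have expansion : a ^ 3 = x ^ 3 * x ^ 3 + -3 * x * ((x ^ 2 - a) * x ^ 3) +
      (3 * x ^ 2 - (x ^ 2 - a)) * ((x ^ 2 - a) * (x ^ 2 - a)) := by
    ring
  rw [expansion, pow_two I]
  exact add_mem (add_mem (Ideal.mul_mem_mul hg hg)
    (Ideal.mul_mem_left _ _ (Ideal.mul_mem_mul hf hg)))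
    (Ideal.mul_mem_left _ _ (Ideal.mul_mem_mul hf hf))

end Membership

section Contraction

variable {R : Type*} [CommRing R] {p : R}

theorem sq_dvd_coeff_zero_add_mul_coeff_two_of_mem_span {q : R[X]}
    (hq : q ∈ Ideal.span {X ^ 2 - C p, X ^ 3}) : p ^ 2 ∣ q.coeff 0 + p * q.coeff 2 := by
  obtain ⟨a, b, rfl⟩ := Ideal.mem_span_pair.mp hq
  have coeff_zero : (a * (X ^ 2 - C p) + b * X ^ 3).coeff 0 = -(a.coeff 0 * p) := by
    simp [mul_sub]
  have coeff_two : (a * (X ^ 2 - C p) + b * X ^ 3).coeff 2 = a.coeff 0 - a.coeff 2 * p := by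
    simp [mul_sub, coeff_mul_X_pow']
  rw [coeff_zero, coeff_two]
  exact ⟨-a.coeff 2, by ring⟩

variable (p) in
theorem comap_C_span_sq_sub_cube :
    (Ideal.span {X ^ 2 - C p, X ^ 3}).comap C = Ideal.span {p ^ 2} := by
  apply le_antisymm
  · intro c hc
    have dvd := sq_dvd_coeff_zero_add_mul_coeff_two_of_mem_span (Ideal.mem_comap.mp hc)
    rw [Ideal.mem_span_singleton]
    simpa [coeff_C] using dvd
  · rw [Ideal.span_singleton_le_iff_mem, Ideal.mem_comap, C_pow]
    exact sq_mem_span_sq_sub_cube X (C p)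

variable (p) in
theorem cube_mem_comap_C_span_sq_sub_cube_sq :
    p ^ 3 ∈ (Ideal.span {X ^ 2 - C p, X ^ 3} ^ 2).comap C := by
  rw [Ideal.mem_comap, C_pow]
  exact cube_mem_span_sq_sub_cube_sq X (C p)

theorem comap_C_span_sq_sub_cube_sq_ne (hp : ¬ p ^ 4 ∣ p ^ 3) :
    (Ideal.span {X ^ 2 - C p, X ^ 3} ^ 2).comap C ≠
      (Ideal.span {X ^ 2 - C p, X ^ 3}).comap C ^ 2 := by
  intro heq
  have hmem := cube_mem_comap_C_span_sq_sub_cube_sq p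
  rw [heq, comap_C_span_sq_sub_cube, Ideal.span_singleton_pow, Ideal.mem_span_singleton,
    ← pow_mul] at hmem
  exact hp hmem

theorem stmt_18_general (hp : ¬ p ^ 4 ∣ p ^ 3) :
    (Ideal.span {X ^ 2 - C p, X ^ 3}).comap C = Ideal.span {p ^ 2} ∧
      p ^ 3 ∈ (Ideal.span {X ^ 2 - C p, X ^ 3} ^ 2).comap C ∧
      ¬ IsPowerStable (Ideal.span {X ^ 2 - C p, X ^ 3}) ∧
      (Ideal.span {X ^ 2 - C p, X ^ 3} ^ 2).comap C ≠
        (Ideal.span {X ^ 2 - C p, X ^ 3}).comap C ^ 2 :=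
  have hne := comap_C_span_sq_sub_cube_sq_ne hp
  ⟨comap_C_span_sq_sub_cube p, cube_mem_comap_C_span_sq_sub_cube_sq p,
    fun stable => hne (stable 2 one_le_two), hne⟩

end Contraction

theorem stmt_18 {R : Type*} [CommRing R] [IsDomain R] [IsPrincipalIdealRing R]
    (p : R) (hp : Prime p) :
    (Ideal.span {X ^ 2 - Polynomial.C p, X ^ 3} : Ideal R[X]).comap (C : R →+* R[X]) =
        Ideal.span {p ^ 2} ∧
      p ^ 3 ∈ ((Ideal.span {X ^ 2 - Polynomial.C p, X ^ 3} : Ideal R[X]) ^ 2).comap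
        (C : R →+* R[X]) ∧
      ¬ IsPowerStable (Ideal.span {X ^ 2 - Polynomial.C p, X ^ 3} : Ideal R[X]) ∧
      ((Ideal.span {X ^ 2 - Polynomial.C p, X ^ 3} : Ideal R[X]) ^ 2).comap (C : R →+* R[X]) ≠
        ((Ideal.span {X ^ 2 - Polynomial.C p, X ^ 3} : Ideal R[X]).comap (C : R →+* R[X])) ^ 2 :=
  stmt_18_general ((pow_dvd_pow_iff hp.ne_zero hp.not_isUnit).not.mpr (by decide))
end
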